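/- For all integers t ≥ 1, ℓ ≥ 1 and d ≥ 1 there exists a constant C = C(t, ℓ) > 0 such that for all n ≥ 2, every dnf-semilinear graph of complexity (t, ℓ) in dimension d on n vertices admits a biclique cover of size at most C · n · (log₂ n)^{t+1}. -/

import Mathlib

/-! Each clause of the DNF is a conjunction of `t` comparisons `x_j(u) < y_j(v)` of real numbers,
and replacing reals by ranks makes these comparisons of naturals `r_j(u) < s_j(v)` bounded by `n`.
For naturals, `r < s` holds exactly when at some bit position `k` the higher parts of `r` and `s`
agree while bit `k` of `r` is `0` and bit `k` of `s` is `1` (`exists_split_bit`,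
`lt_of_split_bit`). Fixing the clause, a position `k_j` and a common higher part `p_j` for each `j`
thus gives a product set `A × B` of pairs satisfying the clause, and these cover all such pairs.
To force `A` and `B` to be disjoint, the vertices are numbered, and `A` and `B` are further required
to consist of numbers which take different values at a fixed bit.

With `K = ⌊log₂ n⌋ + 1` bits, there are `l * K ^ t * K * 2` choices of clause, positions and
separating bit; for each of them, the sets `A` for the different `p` are disjoint, as are the sets
`B`, so the total size is at most `4 l n K ^ (t + 1)`, and `K ≤ 2 log₂ n`. -/

/-- A biclique cover of a simple graph `G`: a finite family of pairs of disjoint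
vertex sets `(A i, B i)` such that every pair in `A i × B i` is an edge of `G`,
and every edge of `G` is covered by at least one biclique. -/
def IsBicliqueCover {V : Type*} (G : SimpleGraph V) {m : ℕ}
    (A B : Fin m → Finset V) : Prop :=
  (∀ i, Disjoint (A i) (B i)) ∧
  (∀ i, ∀ a ∈ A i, ∀ b ∈ B i, G.Adj a b) ∧
  (∀ u v, G.Adj u v → ∃ i, (u ∈ A i ∧ v ∈ B i) ∨ (v ∈ A i ∧ u ∈ B i))

/-- A biclique partition: a biclique cover in which every edge is covered by
exactly one biclique. -/
def IsBicliquePartition {V : Type*} (G : SimpleGraph V) {m : ℕ}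
    (A B : Fin m → Finset V) : Prop :=
  (∀ i, Disjoint (A i) (B i)) ∧
  (∀ i, ∀ a ∈ A i, ∀ b ∈ B i, G.Adj a b) ∧
  (∀ u v, G.Adj u v → ∃! i, (u ∈ A i ∧ v ∈ B i) ∨ (v ∈ A i ∧ u ∈ B i))

/-- The size of a biclique cover: the sum of `|A i| + |B i|`. -/
def coverSize {V : Type*} {m : ℕ} (A B : Fin m → Finset V) : ℕ :=
  ∑ i, ((A i).card + (B i).card)

/-- The most significant bit at which `r < s` differ. -/
lemma exists_split_bit (K : ℕ) : ∀ r s : ℕ, r < s → s < 2 ^ K →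
    ∃ k < K, r / 2 ^ (k + 1) = s / 2 ^ (k + 1) ∧ r / 2 ^ k % 2 = 0 ∧ s / 2 ^ k % 2 = 1 := by
  induction K with
  | zero => intro r s h1 h2; simp at h2; omega
  | succ K ih =>
    intro r s h1 h2
    by_cases h : r / 2 = s / 2
    · exact ⟨0, by omega, by simpa using h, by simp; omega, by simp; omega⟩
    · obtain ⟨k, hk, e1, e2, e3⟩ := ih (r / 2) (s / 2) (by omega) (by rw [pow_succ] at h2; omega)
      simp only [Nat.div_div_eq_div_mul, ← pow_succ'] at e1 e2 e3
      exact ⟨k + 1, by omega, e1, e2, e3⟩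

lemma lt_of_split_bit {r s k : ℕ} (h : r / 2 ^ (k + 1) = s / 2 ^ (k + 1))
    (hr : r / 2 ^ k % 2 = 0) (hs : s / 2 ^ k % 2 = 1) : r < s := by
  by_contra! hle
  have h1 := Nat.div_le_div_right (c := 2 ^ k) hle
  rw [pow_succ, ← Nat.div_div_eq_div_mul, ← Nat.div_div_eq_div_mul] at h
  omega

lemma exists_bit_ne {K r s : ℕ} (h : r ≠ s) (hr : r < 2 ^ K) (hs : s < 2 ^ K) :
    ∃ k < K, r / 2 ^ k % 2 ≠ s / 2 ^ k % 2 := by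
  rcases lt_or_gt_of_ne h with h | h
  · obtain ⟨k, hk, -, h1, h2⟩ := exists_split_bit K _ _ h hs
    exact ⟨k, hk, by omega⟩
  · obtain ⟨k, hk, -, h1, h2⟩ := exists_split_bit K _ _ h hr
    exact ⟨k, hk, by omega⟩

/-- A comparison between two real functions on a finite set is a comparison of ranks. -/
lemma exists_rank {V : Type*} [Fintype V] (x y : V → ℝ) :
    ∃ r s : V → ℕ, (∀ u, r u ≤ Fintype.card V) ∧ (∀ v, s v ≤ Fintype.card V) ∧
      ∀ u v, x u < y v ↔ r u < s v := by
  classical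
  refine ⟨fun u => (Finset.univ.filter fun w => y w ≤ x u).card,
    fun v => (Finset.univ.filter fun w => y w ≤ y v).card,
    fun u => Finset.card_le_univ _, fun v => Finset.card_le_univ _,
    fun u v => ⟨fun h => ?_, fun h => ?_⟩⟩
  · apply Finset.card_lt_card
    rw [Finset.ssubset_iff_of_subset]
    · exact ⟨v, by simp, by simpa using h⟩
    · intro w hw
      simp only [Finset.mem_filter, Finset.mem_univ, true_and] at hw ⊢
      linarith
  · by_contra! hle
    refine absurd h (not_lt.2 (Finset.card_le_card ?_))
    intro w hw
    simp only [Finset.mem_filter, Finset.mem_univ, true_and] at hw ⊢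
    linarith

/-- A family of sets indexed by pairs, each vertex lying in at most one set for each first
coordinate, has total size at most the number of first coordinates times the number of vertices. -/
lemma sum_card_le_of_fiber {V S P : Type*} [Fintype V] [Fintype S] [Fintype P]
    (A : S × P → Finset V) (h : ∀ σ p q u, u ∈ A (σ, p) → u ∈ A (σ, q) → p = q) :
    ∑ i, (A i).card ≤ Fintype.card S * Fintype.card V := by
  classical
  rw [Fintype.sum_prod_type]
  calc ∑ σ, ∑ p, (A (σ, p)).card ≤ ∑ _σ : S, Fintype.card V := by
        refine Finset.sum_le_sum fun σ _ => ?_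
        rw [← Finset.card_biUnion]
        · exact Finset.card_le_univ _
        · intro p _ q _ hpq
          exact Finset.disjoint_left.2 fun u hu hu' => hpq (h σ p q u hu hu')
    _ = _ := by simp

/-- The purely combinatorial form of the result, with the clauses given by ranks `r`, `s`. -/
lemma exists_cover_of_rank {V : Type} [Fintype V] {t l K : ℕ} (G : SimpleGraph V)
    (hK : Fintype.card V < 2 ^ K) (r s : Fin l → Fin t → V → ℕ)
    (hr : ∀ i j u, r i j u ≤ Fintype.card V) (hs : ∀ i j u, s i j u ≤ Fintype.card V)
    (hG : ∀ u v, u ≠ v → (G.Adj u v ↔ ∃ i, ∀ j, r i j u < s i j v)) :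
    ∃ (m : ℕ) (A B : Fin m → Finset V), IsBicliqueCover G A B ∧
      coverSize A B ≤ 4 * l * Fintype.card V * K ^ (t + 1) := by
  classical
  let num : V → ℕ := fun v => (Fintype.equivFin V v : ℕ)
  have num_lt : ∀ v, num v < 2 ^ K := fun v => (Fintype.equivFin V v).2.trans hK
  have num_inj : ∀ u v, num u = num v → u = v := fun u v h =>
    (Fintype.equivFin V).injective (Fin.ext h)
  -- clause, bit positions of the comparisons, separating bit position and its value on `A`
  let S := Fin l × (Fin t → Fin K) × Fin K × Fin 2
  -- common higher parts
  let P := Fin t → Fin (Fintype.card V + 1)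
  let A : S × P → Finset V := fun ⟨⟨i, k, k₀, e⟩, p⟩ => Finset.univ.filter fun u =>
    (∀ j, r i j u / 2 ^ ((k j : ℕ) + 1) = p j ∧ r i j u / 2 ^ (k j : ℕ) % 2 = 0) ∧
      num u / 2 ^ (k₀ : ℕ) % 2 = e
  let B : S × P → Finset V := fun ⟨⟨i, k, k₀, e⟩, p⟩ => Finset.univ.filter fun v =>
    (∀ j, s i j v / 2 ^ ((k j : ℕ) + 1) = p j ∧ s i j v / 2 ^ (k j : ℕ) % 2 = 1) ∧
      num v / 2 ^ (k₀ : ℕ) % 2 ≠ e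
  have hA : ∑ i, (A i).card ≤ Fintype.card S * Fintype.card V := by
    apply sum_card_le_of_fiber
    rintro ⟨i, k, k₀, e⟩ p q u hp hq
    simp only [A, Finset.mem_filter, Finset.mem_univ, true_and] at hp hq
    exact funext fun j => Fin.ext ((hp.1 j).1.symm.trans (hq.1 j).1)
  have hB : ∑ i, (B i).card ≤ Fintype.card S * Fintype.card V := by
    apply sum_card_le_of_fiber
    rintro ⟨i, k, k₀, e⟩ p q u hp hq
    simp only [B, Finset.mem_filter, Finset.mem_univ, true_and] at hp hq
    exact funext fun j => Fin.ext ((hp.1 j).1.symm.trans (hq.1 j).1)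
  have hS : Fintype.card S = l * (K ^ t * (K * 2)) := by
    simp [S, Fintype.card_prod]
  have hdis : ∀ x, Disjoint (A x) (B x) := by
    rintro ⟨⟨i, k, k₀, e⟩, p⟩
    refine Finset.disjoint_left.2 fun u hu hv => ?_
    simp only [A, B, Finset.mem_filter, Finset.mem_univ, true_and] at hu hv
    exact hv.2 hu.2
  have hadj : ∀ x, ∀ u ∈ A x, ∀ v ∈ B x, G.Adj u v := by
    intro x u hu v hv
    have hne : u ≠ v := fun h => Finset.disjoint_left.1 (hdis x) hu (h ▸ hv)
    rw [hG u v hne]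
    obtain ⟨⟨i, k, k₀, e⟩, p⟩ := x
    simp only [A, B, Finset.mem_filter, Finset.mem_univ, true_and] at hu hv
    exact ⟨i, fun j => lt_of_split_bit ((hu.1 j).1.trans (hv.1 j).1.symm) (hu.1 j).2 (hv.1 j).2⟩
  let E := Fintype.equivFin (S × P)
  refine ⟨Fintype.card (S × P), A ∘ E.symm, B ∘ E.symm, ⟨fun x => hdis _, fun x => hadj _,
    fun u v huv => ?_⟩, ?_⟩
  · obtain ⟨i, hi⟩ := (hG u v huv.ne).1 huv
    choose k hk h1 h2 h3 using fun j =>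
      exists_split_bit K _ _ (hi j) ((hs i j v).trans_lt hK)
    obtain ⟨k₀, hk₀, hne⟩ :=
      exists_bit_ne (fun h => huv.ne (num_inj u v h)) (num_lt u) (num_lt v)
    refine ⟨E ⟨⟨i, fun j => ⟨k j, hk j⟩, ⟨k₀, hk₀⟩, ⟨num u / 2 ^ k₀ % 2, Nat.mod_lt _ two_pos⟩⟩,
      fun j => ⟨r i j u / 2 ^ (k j + 1),
        Nat.lt_succ_of_le ((Nat.div_le_self _ _).trans (hr i j u))⟩⟩, Or.inl ⟨?_, ?_⟩⟩
    · rw [Function.comp_apply, Equiv.symm_apply_apply]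
      exact Finset.mem_filter.2 ⟨Finset.mem_univ _, fun j => ⟨rfl, h2 j⟩, rfl⟩
    · rw [Function.comp_apply, Equiv.symm_apply_apply]
      exact Finset.mem_filter.2 ⟨Finset.mem_univ _, fun j => ⟨(h1 j).symm, h3 j⟩, hne.symm⟩
  · simp only [coverSize, Function.comp_apply]
    rw [Equiv.sum_comp E.symm (fun x => (A x).card + (B x).card), Finset.sum_add_distrib]
    refine (add_le_add hA hB).trans (le_of_eq ?_)
    rw [hS]
    ring

/-- Every dnf-semilinear graph of complexity `(t, ℓ)` in dimension `d` on `n`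
vertices admits a biclique cover of size `O(n (log₂ n)^{t+1})`, where the
constant depends only on `t` and `ℓ`. -/
theorem stmt_6 (t l : ℕ) (ht : 1 ≤ t) (hl : 1 ≤ l) :
    ∃ C : ℝ, 0 < C ∧ ∀ d : ℕ, 1 ≤ d → ∀ n : ℕ, 2 ≤ n →
      ∀ (V : Type) [Fintype V], Fintype.card V = n →
      ∀ (G : SimpleGraph V) (φ : V → Fin d → ℝ)
        (a b : Fin l → Fin t → Fin d → ℝ) (c : Fin l → Fin t → ℝ),
      (∀ u v : V, u ≠ v →
        (G.Adj u v ↔ ∃ i : Fin l, ∀ j : Fin t,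
          (∑ k, a i j k * φ u k) + (∑ k, b i j k * φ v k) + c i j < 0)) →
      ∃ (m : ℕ) (A B : Fin m → Finset V),
        IsBicliqueCover G A B ∧
        (coverSize A B : ℝ) ≤ C * (n : ℝ) * (Real.logb 2 n) ^ (t + 1) := by
  refine ⟨4 * l * 2 ^ (t + 1), by positivity, ?_⟩
  intro d _ n hn V _ hV G φ a b c hG
  choose r s hr hs hrs using fun (i : Fin l) (j : Fin t) =>
    exists_rank (fun u => (∑ k, a i j k * φ u k) + c i j) (fun v => -∑ k, b i j k * φ v k)
  obtain ⟨m, A, B, hcov, hsize⟩ := exists_cover_of_rank (K := Nat.log 2 n + 1) G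
    (by rw [hV]; exact Nat.lt_pow_succ_log_self one_lt_two n) r s hr hs (fun u v huv => by
      rw [hG u v huv]
      refine exists_congr fun i => forall_congr' fun j => ?_
      rw [← hrs]
      constructor <;> intro h <;> linarith)
  refine ⟨m, A, B, hcov, ?_⟩
  have hn0 : (0 : ℝ) < n := by positivity
  have hlog : ((Nat.log 2 n : ℕ) : ℝ) ≤ Real.logb 2 n := by
    rw [Real.le_logb_iff_rpow_le one_lt_two hn0, Real.rpow_natCast]
    exact_mod_cast Nat.pow_log_le_self 2 (by omega)
  have hone : 1 ≤ Real.logb 2 n := by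
    rw [Real.le_logb_iff_rpow_le one_lt_two hn0, Real.rpow_one]
    exact_mod_cast hn
  have hK : ((Nat.log 2 n : ℕ) : ℝ) + 1 ≤ 2 * Real.logb 2 n := by linarith
  rw [hV] at hsize
  calc (coverSize A B : ℝ) ≤ 4 * l * n * ((Nat.log 2 n : ℕ) + 1) ^ (t + 1) := by
        exact_mod_cast hsize
    _ ≤ 4 * l * n * (2 * Real.logb 2 n) ^ (t + 1) := by gcongr
    _ = _ := by rw [mul_pow]; ring
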